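/- arXiv:1911.11733 — 9 statements merged into one kernel-verified Lean document; each statement's English description precedes it below -/
import Mathlib

section
/- Let G be a finite group. Then the commutator subgroup ⁅G,G⁆ is contained in the center Z(G) (equivalently, G is nilpotent of class at most 2) if and only if for every irreducible finite-dimensional complex representation V of G there exists an integer n ≥ 1 such that every irreducible constituent of the n-fold tensor power V^{⊗n} is one-dimensional (i.e. V^{⊗n} is a direct sum of one-dimensional subrepresentations). -/
open scoped TensorProduct

/-- The `n`-fold tensor power of a representation, with the diagonal `G`-action. -/
noncomputable def tensorPowerRep {k G V : Type*} [CommSemiring k] [Monoid G]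
    [AddCommMonoid V] [Module k V] (ρ : Representation k G V) (n : ℕ) :
    Representation k G (⨂[k] _ : Fin n, V) :=
  PiTensorProduct.mapMonoidHom.comp (Pi.monoidHom fun _ : Fin n => ρ)

section Helpers

theorem aux_schur {G V : Type} [Group G] [AddCommGroup V] [Module ℂ V] [FiniteDimensional ℂ V]
    (ρ : Representation ℂ G V) (h : IsSimpleModule (MonoidAlgebra ℂ G) ρ.asModule)
    (T : V →ₗ[ℂ] V) (hT : ∀ g v, T (ρ g v) = ρ g (T v)) : ∃ a : ℂ, ∀ v, T v = a • v := by
  have : ρ.IsIrreducible := (Representation.irreducible_iff_isSimpleModule_asModule ρ).2 h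
  let f : Representation.IntertwiningMap ρ ρ := LinearMap.intertwiningMap_of_isIntertwiningMap ρ ρ T hT
  obtain ⟨a, ha⟩ :=
    (Representation.IsIrreducible.algebraMap_intertwiningMap_bijective_of_isAlgClosed
      (ρ := ρ)).2 f
  refine ⟨a, fun v => ?_⟩
  have : f v = (algebraMap ℂ (Representation.IntertwiningMap ρ ρ) a) v := by rw [ha]
  exact this

theorem aux_one_dim {G W : Type} [Group G] [AddCommGroup W] [Module ℂ W] [FiniteDimensional ℂ W]
    (σ : Representation ℂ G W) (h : IsSimpleModule (MonoidAlgebra ℂ G) σ.asModule)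
    (hc : ∀ g g' w, σ g (σ g' w) = σ g' (σ g w)) : Module.finrank ℂ W = 1 := by
  have hi : σ.IsIrreducible := (Representation.irreducible_iff_isSimpleModule_asModule σ).2 h
  have : Nontrivial W := IsSimpleModule.nontrivial (MonoidAlgebra ℂ G) σ.asModule
  obtain ⟨w, hw⟩ := exists_ne (0 : W)
  let S : Subrepresentation σ :=
    { toSubmodule := Submodule.span ℂ {w}
      apply_mem_toSubmodule := by
        intro g v hv
        obtain ⟨a, ha⟩ := aux_schur σ h (σ g) (fun g' v => hc g g' v)
        rw [ha]
        exact Submodule.smul_mem _ _ hv }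
  have hmem : w ∈ S.toSubmodule := Submodule.mem_span_singleton_self w
  rcases eq_bot_or_eq_top S with hS | hS
  · rw [hS] at hmem
    exact (hw hmem).elim
  · rw [finrank_eq_one_iff_of_nonzero w hw]
    exact congrArg Subrepresentation.toSubmodule hS

theorem aux_simple_induction {G X : Type} [Group G] [Finite G] [AddCommGroup X] [Module ℂ X]
    (τ : Representation ℂ G X) (P : X → Prop) (h0 : P 0)
    (hadd : ∀ x y, P x → P y → P (x + y))
    (hs : ∀ (W : Type) [AddCommGroup W] [Module ℂ W] (σ : Representation ℂ G W),
      IsSimpleModule (MonoidAlgebra ℂ G) σ.asModule → ∀ f : W →ₗ[ℂ] X, Function.Injective f →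
      (∀ g w, f (σ g w) = τ g (f w)) → ∀ w, P (f w)) (x : X) : P x := by
  have : NeZero (Nat.card G : ℂ) := ⟨by exact_mod_cast Nat.card_pos.ne'⟩
  have htop := IsSemisimpleModule.sSup_simples_eq_top (MonoidAlgebra ℂ G) τ.asModule
  rw [sSup_eq_iSup'] at htop
  have hx : (τ.asModuleEquiv.symm x) ∈ (⊤ : Submodule (MonoidAlgebra ℂ G) τ.asModule) := trivial
  rw [← htop] at hx
  suffices H : ∀ y : τ.asModule, y ∈ (⨆ m : {m : Submodule (MonoidAlgebra ℂ G) τ.asModule |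
      IsSimpleModule (MonoidAlgebra ℂ G) m}, (m : Submodule (MonoidAlgebra ℂ G) τ.asModule)) →
      P (τ.asModuleEquiv y) by simpa using H _ hx
  intro y hy
  induction hy using Submodule.iSup_induction' with
  | zero => simpa using h0
  | add y z _ _ h1 h2 => rw [map_add]; exact hadd _ _ h1 h2
  | mem m y hy =>
    obtain ⟨m, hm⟩ := m
    let S := Subrepresentation.ofSubmodule' m
    refine hs S.toSubmodule S.toRepresentation ?_ S.toSubmodule.subtype
      S.toSubmodule.subtype_injective (fun g w => rfl) ⟨τ.asModuleEquiv y, hy⟩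
    have hm' : IsSimpleModule (MonoidAlgebra ℂ G) m := hm
    let e : S.toRepresentation.asModule ≃ₗ[MonoidAlgebra ℂ G] m :=
      { toFun := fun x => ⟨τ.asModuleEquiv.symm (S.toRepresentation.asModuleEquiv x).1,
          (S.toRepresentation.asModuleEquiv x).2⟩
        invFun := fun x => S.toRepresentation.asModuleEquiv.symm ⟨τ.asModuleEquiv x.1, x.2⟩
        left_inv := fun x => rfl
        right_inv := fun x => rfl
        map_add' := fun x y => rfl
        map_smul' := by
          intro r x
          induction r using MonoidAlgebra.induction_linear with
          | zero =>
            rw [RingHom.id_apply, zero_smul, zero_smul]; rfl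
          | add a b ha hb =>
            rw [add_smul, RingHom.id_apply, add_smul]
            rw [RingHom.id_apply] at ha hb
            rw [← ha, ← hb]; rfl
          | single g a =>
            apply Subtype.ext
            rw [RingHom.id_apply, Submodule.coe_smul, Representation.single_smul,
              Representation.single_smul]
            rfl }
    exact IsSimpleModule.congr e

theorem aux_comm_le_ker {G W : Type} [Group G] [AddCommGroup W] [Module ℂ W]
    (σ : Representation ℂ G W) (hc : ∀ g g' w, σ g (σ g' w) = σ g' (σ g w))
    (c : G) (hcc : c ∈ commutator G) : σ c = 1 := by
  have : commutator G ≤ MonoidHom.ker σ := by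
    rw [commutator_def, Subgroup.commutator_le]
    intro g _ g' _
    rw [MonoidHom.mem_ker, commutatorElement_def, map_mul, map_mul, map_mul]
    have : σ g * σ g' = σ g' * σ g := LinearMap.ext fun w => hc g g' w
    rw [this, mul_assoc (σ g'), ← map_mul, mul_inv_cancel, map_one, mul_one, ← map_mul,
      mul_inv_cancel, map_one]
  exact this hcc

theorem aux_tensor_apply {G V : Type} [Group G] [AddCommGroup V] [Module ℂ V]
    (ρ : Representation ℂ G V) (n : ℕ) (g : G) (v : Fin n → V) :
    tensorPowerRep ρ n g (PiTensorProduct.tprod ℂ v) =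
      PiTensorProduct.tprod ℂ (fun i => ρ g (v i)) := by
  simp [tensorPowerRep, PiTensorProduct.mapMonoidHom]
  rfl

theorem aux_scalar {V : Type} [AddCommGroup V] [Module ℂ V] (T : V →ₗ[ℂ] V) (n : ℕ) (hn : 1 ≤ n)
    (h : ∀ v : V, PiTensorProduct.tprod ℂ (fun _ : Fin n => T v) =
      PiTensorProduct.tprod ℂ (fun _ : Fin n => v)) : ∃ a : ℂ, T = a • 1 := by
  apply LinearMap.exists_eq_smul_id_of_forall_notLinearIndependent
  intro v hv
  have hnot : T v ∉ Submodule.span ℂ {v} := by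
    intro hmem
    obtain ⟨a, ha⟩ := Submodule.mem_span_singleton.1 hmem
    have := (LinearIndependent.pair_iff.1 hv) a (-1) (by rw [ha]; simp)
    simpa using this.2
  obtain ⟨φ, h2, hφ⟩ := Submodule.exists_dual_map_eq_bot_of_notMem hnot inferInstance
  have h1 : φ v = 0 := by
    have : φ v ∈ Submodule.map φ (Submodule.span ℂ {v}) :=
      Submodule.mem_map_of_mem (Submodule.mem_span_singleton_self v)
    rw [hφ] at this
    exact this
  have := congrArg (PiTensorProduct.lift
    ((MultilinearMap.mkPiRing ℂ (Fin n) (1 : ℂ)).compLinearMap fun _ => φ)) (h v)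
  have hn0 : n ≠ 0 := by omega
  simp [h1, h2, hn0] at this

end Helpers

/-- **Characterization of nilpotency class ≤ 2**: for a finite group `G`, the commutator
subgroup is contained in the center if and only if for every irreducible finite-dimensional
complex representation `V` of `G` there is an `n ≥ 1` such that every irreducible constituent
of `V^{⊗ n}` (with the diagonal action) is one-dimensional. -/
theorem commutator_le_center_iff_tensorPower_linearizes
    (G : Type) [Group G] [Finite G] :
    commutator G ≤ Subgroup.center G ↔
      ∀ (V : Type) [AddCommGroup V] [Module ℂ V] [FiniteDimensional ℂ V]
        (ρ : Representation ℂ G V),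
        IsSimpleModule (MonoidAlgebra ℂ G) ρ.asModule →
        ∃ n : ℕ, 1 ≤ n ∧
          ∀ (W : Type) [AddCommGroup W] [Module ℂ W] (σ : Representation ℂ G W),
            IsSimpleModule (MonoidAlgebra ℂ G) σ.asModule →
            ∀ f : W →ₗ[ℂ] (⨂[ℂ] _ : Fin n, V), f ≠ 0 →
              (∀ (g : G) (w : W), f (σ g w) = tensorPowerRep ρ n g (f w)) →
              Module.finrank ℂ W = 1 := by
  constructor
  · intro hG V _ _ _ ρ hρ
    refine ⟨Nat.card G, Nat.card_pos, ?_⟩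
    intro W _ _ σ hσ f hf hfe
    have hi : σ.IsIrreducible := (Representation.irreducible_iff_isSimpleModule_asModule σ).2 hσ
    have hinj : Function.Injective f := by
      rcases Representation.IsIrreducible.injective_or_eq_zero
        (LinearMap.intertwiningMap_of_isIntertwiningMap σ (tensorPowerRep ρ (Nat.card G)) f hfe)
        with h | h
      · exact h
      · exact (hf (congrArg Representation.IntertwiningMap.toLinearMap h)).elim
    have : FiniteDimensional ℂ W := FiniteDimensional.of_injective f hinj
    -- commutators act trivially on the tensor power
    have htriv : ∀ c ∈ commutator G, tensorPowerRep ρ (Nat.card G) c = 1 := by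
      intro c hc
      obtain ⟨a, ha⟩ := aux_schur ρ hρ (ρ c) (fun g v => by
        have := Subgroup.mem_center_iff.1 (hG hc) g
        rw [← Module.End.mul_apply, ← Module.End.mul_apply, ← map_mul, ← map_mul, this])
      have : Nontrivial V := IsSimpleModule.nontrivial (MonoidAlgebra ℂ G) ρ.asModule
      obtain ⟨v, hv⟩ := exists_ne (0 : V)
      have hpow : ∀ k : ℕ, ρ (c ^ k) v = a ^ k • v := by
        intro k
        induction k with
        | zero => simp
        | succ k ih => rw [pow_succ', map_mul, Module.End.mul_apply, ih, map_smul, ha, smul_smul,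
            pow_succ]
      have han : a ^ Nat.card G = 1 := by
        have h1 := hpow (Nat.card G)
        rw [pow_card_eq_one', map_one, Module.End.one_apply] at h1
        have h2 : (a ^ Nat.card G - 1) • v = 0 := by rw [sub_smul, ← h1, one_smul, sub_self]
        exact sub_eq_zero.1 ((smul_eq_zero.1 h2).resolve_right hv)
      apply PiTensorProduct.ext
      ext v
      simp only [LinearMap.compMultilinearMap_apply, Module.End.one_apply]
      rw [aux_tensor_apply]
      simp only [ha]
      rw [MultilinearMap.map_smul_univ]
      simp [han]
    apply aux_one_dim σ hσ
    intro g g' w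
    have hk : ∀ c ∈ commutator G, ∀ w, σ c w = w := by
      intro c hc w
      apply hinj
      rw [hfe, htriv c hc, Module.End.one_apply]
    have hmem : g * g' * g⁻¹ * g'⁻¹ ∈ commutator G :=
      Subgroup.commutator_mem_commutator (Subgroup.mem_top _) (Subgroup.mem_top _)
    have := hk _ hmem (σ (g' * g) w)
    rw [← Module.End.mul_apply, ← map_mul] at this
    rw [← Module.End.mul_apply, ← Module.End.mul_apply, ← map_mul, ← map_mul, ← this]
    congr 2
    group
  · intro H c hc
    rw [Subgroup.mem_center_iff]
    intro g
    have key : ∀ x : MonoidAlgebra ℂ G,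
        (Representation.leftRegular ℂ G) (g * c) x = (Representation.leftRegular ℂ G) (c * g) x := by
      apply aux_simple_induction (Representation.leftRegular ℂ G)
      · rw [map_zero, map_zero]
      · intro x y hx hy
        rw [map_add, map_add, hx, hy]
      · intro V _ _ ρ hρ f hf hfe v
        have : FiniteDimensional ℂ (MonoidAlgebra ℂ G) :=
          Module.Finite.equiv (MonoidAlgebra.coeffLinearEquiv ℂ).symm
        have : FiniteDimensional ℂ V := FiniteDimensional.of_injective f hf
        obtain ⟨n, hn, hW⟩ := H V ρ hρ
        have htriv : ∀ x, tensorPowerRep ρ n c x = x := by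
          apply aux_simple_induction (tensorPowerRep ρ n)
          · rw [map_zero]
          · intro x y hx hy
            rw [map_add, hx, hy]
          · intro W _ _ σ hσ f hf hfe w
            have : Nontrivial W := IsSimpleModule.nontrivial (MonoidAlgebra ℂ G) σ.asModule
            have hf0 : f ≠ 0 := by
              rintro rfl
              obtain ⟨w, hw⟩ := exists_ne (0 : W)
              exact hw (hf (by simp))
            have h1 := hW W σ hσ f hf0 hfe
            have hcomm : ∀ g g' w, σ g (σ g' w) = σ g' (σ g w) := by
              intro g g' w
              obtain ⟨u, hu, hspan⟩ := finrank_eq_one_iff'.1 h1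
              obtain ⟨a, ha⟩ := hspan (σ g u)
              obtain ⟨b, hb⟩ := hspan (σ g' u)
              obtain ⟨d, rfl⟩ := hspan w
              simp only [map_smul, ← ha, ← hb]
              rw [smul_comm b a]
            rw [← hfe, aux_comm_le_ker σ hcomm c hc, Module.End.one_apply]
        obtain ⟨a, ha⟩ := aux_scalar (ρ c) n hn (fun v => by
          rw [← aux_tensor_apply ρ n c (fun _ => v), htriv])
        rw [← hfe, ← hfe, map_mul, map_mul, ha]
        simp
    have := key (MonoidAlgebra.single 1 1)
    rw [Representation.ofMulAction_single, Representation.ofMulAction_single] at this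
    simpa using MonoidAlgebra.single_left_injective one_ne_zero this
end

section
/- Let G be a finite group whose commutator subgroup ⁅G,G⁆ is contained in the center Z(G), and let n ≥ 1 be the exponent of ⁅G,G⁆. Then for every irreducible finite-dimensional complex representation V of G, every irreducible constituent of the tensor power V^{⊗n} is one-dimensional. -/
open scoped TensorProduct

theorem invariant_bot_or_top {G V : Type*} [Group G] [AddCommGroup V] [Module ℂ V]
    (ρ : Representation ℂ G V) (hV : IsSimpleModule (MonoidAlgebra ℂ G) ρ.asModule)
    (p : Submodule ℂ V) (hp : ∀ g, ∀ v ∈ p, ρ g v ∈ p) : p = ⊥ ∨ p = ⊤ := by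
  have hI : ρ.IsIrreducible := (Representation.irreducible_iff_isSimpleModule_asModule ρ).2 hV
  let P : Subrepresentation ρ := ⟨p, fun g v hv => hp g v hv⟩
  rcases hI.eq_bot_or_eq_top P with h | h
  · left
    exact congrArg Subrepresentation.toSubmodule h
  · right
    exact congrArg Subrepresentation.toSubmodule h

theorem scalar_of_commute {G V : Type*} [Group G] [AddCommGroup V] [Module ℂ V]
    [FiniteDimensional ℂ V] [Nontrivial V]
    (ρ : Representation ℂ G V) (hV : IsSimpleModule (MonoidAlgebra ℂ G) ρ.asModule)
    (T : Module.End ℂ V) (hT : ∀ g v, T (ρ g v) = ρ g (T v)) :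
    ∃ c : ℂ, ∀ v, T v = c • v := by
  obtain ⟨c, hc⟩ := Module.End.exists_eigenvalue T
  refine ⟨c, ?_⟩
  rcases invariant_bot_or_top ρ hV (Module.End.eigenspace T c) (by
    intro g v hv
    rw [Module.End.mem_eigenspace_iff] at hv ⊢
    rw [hT, hv, map_smul]) with h | h
  · exact absurd h hc
  · intro v
    exact Module.End.mem_eigenspace_iff.1 (h ▸ Submodule.mem_top)

/-- If `G` is a finite group with `⁅G,G⁆ ≤ Z(G)` and `n ≥ 1` is the exponent of `⁅G,G⁆`,
then for every irreducible finite-dimensional complex representation `V` of `G`, every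
irreducible constituent of `V^{⊗ n}` is one-dimensional. -/
theorem tensorPower_exponent_commutator_linearizes
    (G : Type) [Group G] [Finite G]
    (hclass2 : commutator G ≤ Subgroup.center G)
    (n : ℕ) (hn : n = Monoid.exponent ↥(commutator G)) (hn1 : 1 ≤ n)
    (V : Type) [AddCommGroup V] [Module ℂ V] [FiniteDimensional ℂ V]
    (ρ : Representation ℂ G V)
    (hV : IsSimpleModule (MonoidAlgebra ℂ G) ρ.asModule)
    (W : Type) [AddCommGroup W] [Module ℂ W] (σ : Representation ℂ G W)
    (hW : IsSimpleModule (MonoidAlgebra ℂ G) σ.asModule)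
    (f : W →ₗ[ℂ] (⨂[ℂ] _ : Fin n, V)) (hf : f ≠ 0)
    (hequiv : ∀ (g : G) (w : W), f (σ g w) = tensorPowerRep ρ n g (f w)) :
    Module.finrank ℂ W = 1 := by
  have ntV : Nontrivial V := IsSimpleModule.nontrivial (MonoidAlgebra ℂ G) ρ.asModule
  have ntW : Nontrivial W := IsSimpleModule.nontrivial (MonoidAlgebra ℂ G) σ.asModule
  -- `f` is injective
  have hinj : Function.Injective f := by
    rw [← LinearMap.ker_eq_bot]
    rcases invariant_bot_or_top σ hW (LinearMap.ker f) (by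
      intro g v hv
      rw [LinearMap.mem_ker] at hv ⊢
      rw [hequiv, hv, map_zero]) with h | h
    · exact h
    · exact absurd (LinearMap.ker_eq_top.1 h) hf
  have fdW : FiniteDimensional ℂ W := Module.Finite.of_injective f hinj
  -- commutators act trivially on the tensor power
  have htriv : ∀ z ∈ commutator G, tensorPowerRep ρ n z = 1 := by
    intro z hz
    have hzc := Subgroup.mem_center_iff.1 (hclass2 hz)
    obtain ⟨c, hc⟩ := scalar_of_commute ρ hV (ρ z) (by
      intro g v
      rw [← Module.End.mul_apply, ← Module.End.mul_apply, ← map_mul, ← map_mul, hzc g])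
    have hzn : z ^ n = 1 := by
      have := Monoid.pow_exponent_eq_one (⟨z, hz⟩ : commutator G)
      rw [← hn] at this
      exact congrArg Subtype.val this
    have hpow : ∀ (k : ℕ) (v : V), ρ (z ^ k) v = c ^ k • v := by
      intro k
      induction k with
      | zero => intro v; simp
      | succ k ih => intro v; rw [pow_succ, map_mul, Module.End.mul_apply, hc, map_smul, ih,
          smul_smul, pow_succ, mul_comm]
    have hcn : c ^ n = 1 := by
      obtain ⟨v, hv⟩ := exists_ne (0 : V)
      have h := hpow n v
      rw [hzn, map_one, Module.End.one_apply] at h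
      have h2 : (c ^ n - 1) • v = 0 := by rw [sub_smul, one_smul, ← h, sub_self]
      exact sub_eq_zero.1 ((smul_eq_zero.1 h2).resolve_right hv)
    apply PiTensorProduct.ext
    ext v
    change PiTensorProduct.map (fun _ => ρ z) (PiTensorProduct.tprod ℂ v) =
      PiTensorProduct.tprod ℂ v
    rw [PiTensorProduct.map_tprod]
    simp only [hc]
    rw [MultilinearMap.map_smul_univ (PiTensorProduct.tprod ℂ) (fun _ => c) v]
    simp [hcn]
  have hσ : ∀ z ∈ commutator G, σ z = 1 := by
    intro z hz
    ext w
    apply hinj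
    rw [hequiv, htriv z hz]
    rfl
  have hcomm : ∀ g h : G, σ g * σ h = σ h * σ g := by
    intro g h
    have h1 := hσ (g * h * g⁻¹ * h⁻¹) (Subgroup.commutator_mem_commutator (Subgroup.mem_top g)
      (Subgroup.mem_top h))
    have h2 : g * h = (g * h * g⁻¹ * h⁻¹) * (h * g) := by group
    rw [← map_mul, ← map_mul σ h g, h2, map_mul, h1, one_mul]
  have hscal : ∀ g : G, ∃ c : ℂ, ∀ w, σ g w = c • w := fun g =>
    scalar_of_commute σ hW (σ g) (fun h w => congrArg (fun T => T w) (hcomm g h))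
  obtain ⟨w, hw⟩ := exists_ne (0 : W)
  rcases invariant_bot_or_top σ hW (Submodule.span ℂ {w}) (by
    intro g v hv
    obtain ⟨c, hc⟩ := hscal g
    rw [hc]
    exact Submodule.smul_mem _ _ hv) with h | h
  · exact absurd (Submodule.span_singleton_eq_bot.1 h) hw
  · rw [← finrank_top, ← h]
    exact finrank_span_singleton hw
end

section
/- Let K be an algebraically closed field of characteristic 0 and G a finite group. Let V₁, …, V_q be pairwise non-isomorphic simple K[G]-modules, let m₁, …, m_q be natural numbers, let M = ⊕_{i=1}^{q} V_i^{⊕ m_i}, and let v ∈ M have components v^i_j ∈ V_i for 1 ≤ i ≤ q, 1 ≤ j ≤ m_i (each copy of V_i in M being identified with V_i). Then for each i, the multiplicity of V_i in the cyclic submodule K[G]·v generated by v equals dim_K Span_K{v^i_1, …, v^i_{m_i}}; that is, dim_K Hom_{K[G]}(V_i, K[G]·v) = dim_K Span_K{v^i_1, …, v^i_{m_i}}. -/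
/-- For `A` semisimple over an algebraically closed field and `V` simple,
`dim Hom(V, N) = dim Hom(N, V)`, through the composition pairing into `End V = K`. -/
theorem finrank_hom_symm (K A V N : Type) [Field K] [IsAlgClosed K] [Ring A] [Algebra K A]
    [IsSemisimpleRing A]
    [AddCommGroup V] [Module K V] [Module A V] [IsScalarTower K A V] [IsSimpleModule A V]
    [AddCommGroup N] [Module K N] [Module A N] [IsScalarTower K A N]
    [FiniteDimensional K V] [FiniteDimensional K N] :
    Module.finrank K (V →ₗ[A] N) = Module.finrank K (N →ₗ[A] V) := by
  have hfin : Module.Finite K (V →ₗ[A] N) :=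
    .of_injective (LinearMap.restrictScalarsₗ K A V N K) (LinearMap.restrictScalars_injective _)
  let e : Module.End A V ≃ₗ[K] K :=
    (LinearEquiv.ofBijective (Algebra.linearMap K (Module.End A V))
      (IsSimpleModule.algebraMap_end_bijective_of_isAlgClosed K)).symm
  let B : (V →ₗ[A] N) →ₗ[K] (N →ₗ[A] V) →ₗ[K] K :=
    LinearMap.mk₂ K (fun f g => e (g ∘ₗ f))
      (fun f f' g => by rw [LinearMap.comp_add, map_add])
      (fun c f g => by
        rw [← map_smul]; congr 1; ext x
        simp [LinearMap.map_smul_of_tower])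
      (fun f g g' => by rw [LinearMap.add_comp, map_add])
      (fun c f g => by rw [LinearMap.smul_comp, map_smul])
  have hB : ∀ f g, B f g = e (g ∘ₗ f) := fun f g => rfl
  have h1 : Function.Injective B := by
    rw [injective_iff_map_eq_zero]
    intro f hf
    by_contra hne
    have hinj : Function.Injective f := (LinearMap.injective_or_eq_zero f).resolve_right hne
    obtain ⟨g, hg⟩ := IsSemisimpleModule.extension_property f hinj LinearMap.id
    have := hB f g
    rw [hf, hg, LinearMap.zero_apply, eq_comm, map_eq_zero_iff _ e.injective] at this
    apply hne
    ext x
    have hx : x = 0 := LinearMap.congr_fun this x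
    simp [hx]
  have h2 : Function.Injective B.flip := by
    rw [injective_iff_map_eq_zero]
    intro g hg
    by_contra hne
    have hsurj : Function.Surjective g := (LinearMap.surjective_or_eq_zero g).resolve_right hne
    obtain ⟨f, hf⟩ := IsSemisimpleModule.lifting_property g hsurj LinearMap.id
    have : B.flip g f = e (g ∘ₗ f) := rfl
    rw [hg, hf, LinearMap.zero_apply, eq_comm, map_eq_zero_iff _ e.injective] at this
    apply hne
    ext x
    exact LinearMap.congr_fun this (g x)
  have := LinearMap.IsPerfPair.of_injective h1 h2
  exact Module.finrank_of_isPerfPair B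


/-- **Multiplicities in a cyclic submodule.** Let `K` be an algebraically closed field of
characteristic 0, `G` a finite group, `V₁, …, V_q` pairwise non-isomorphic simple
`K[G]`-modules, and `M = ⊕ᵢ Vᵢ^{⊕ mᵢ}` (realized as `Π i, Fin (m i) → V i`). For
`v ∈ M` with components `v i j ∈ V i`, the multiplicity of `V i` in the cyclic submodule
`K[G]·v`, i.e. `dim_K Hom_{K[G]}(V i, K[G]·v)`, equals `dim_K Span_K {v i 1, …, v i mᵢ}`. -/
theorem multiplicity_of_cyclic_submodule
    (K : Type) [Field K] [IsAlgClosed K] [CharZero K]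
    (G : Type) [Group G] [Finite G]
    (q : ℕ) (V : Fin q → Type)
    [∀ i, AddCommGroup (V i)] [∀ i, Module K (V i)]
    [∀ i, Module (MonoidAlgebra K G) (V i)]
    [∀ i, IsScalarTower K (MonoidAlgebra K G) (V i)]
    (hsimple : ∀ i, IsSimpleModule (MonoidAlgebra K G) (V i))
    (hnoniso : ∀ i j, i ≠ j → ¬ Nonempty (V i ≃ₗ[MonoidAlgebra K G] V j))
    (m : Fin q → ℕ)
    (v : (i : Fin q) → Fin (m i) → V i)
    (i : Fin q) :
    Module.finrank K
        (V i →ₗ[MonoidAlgebra K G]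
          ↥(Submodule.span (MonoidAlgebra K G)
              ({v} : Set ((i : Fin q) → Fin (m i) → V i))))
      = Module.finrank K ↥(Submodule.span K (Set.range (v i))) := by
  classical
  have hA : Module.Finite K (MonoidAlgebra K G) := inferInstance
  have hV : ∀ j, Module.Finite K (V j) := fun j =>
    Module.Finite.trans (MonoidAlgebra K G) (V j)
  have : NeZero (Nat.card G : K) := ⟨by simp [Nat.card_pos.ne']⟩
  have hss : IsSemisimpleRing (MonoidAlgebra K G) := inferInstance
  set N := Submodule.span (MonoidAlgebra K G) ({v} : Set ((i : Fin q) → Fin (m i) → V i)) with hN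
  have hNf : FiniteDimensional K N :=
    Module.Finite.trans (R := K) (MonoidAlgebra K G) N
  have := hsimple i
  rw [finrank_hom_symm K (MonoidAlgebra K G) (V i) N]
  have hv : v ∈ N := Submodule.mem_span_singleton_self v
  -- evaluation at `v`
  let ev : (N →ₗ[MonoidAlgebra K G] V i) →ₗ[K] V i :=
    { toFun := fun f => f ⟨v, hv⟩
      map_add' := fun _ _ => rfl
      map_smul' := fun _ _ => rfl }
  have hev : Function.Injective ev := by
    intro f g hfg
    have hfg' : f ⟨v, hv⟩ = g ⟨v, hv⟩ := hfg
    ext ⟨x, hx⟩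
    obtain ⟨a, rfl⟩ := Submodule.mem_span_singleton.1 hx
    have h : (⟨a • v, hx⟩ : N) = a • ⟨v, hv⟩ := rfl
    rw [h, map_smul, map_smul, hfg']
  have hrange : LinearMap.range ev = Submodule.span K (Set.range (v i)) := by
    apply le_antisymm
    · rintro _ ⟨f, rfl⟩
      obtain ⟨g, hg⟩ := IsSemisimpleModule.extension_property N.subtype N.injective_subtype f
      have h1 : ev f = g v := by
        rw [← hg]; rfl
      rw [h1]
      have h2 : v = ∑ j, ∑ k, Pi.single j (Pi.single k (v j k)) := by
        funext j
        rw [Finset.sum_apply, Finset.sum_eq_single j]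
        · funext k
          rw [Finset.sum_apply, Finset.sum_apply, Finset.sum_eq_single k]
          · simp
          · intro b _ hb
            simp [hb.symm]
          · simp
        · intro b _ hb
          rw [Finset.sum_apply]
          exact Finset.sum_eq_zero fun k _ => Pi.single_eq_of_ne hb.symm _
        · simp
      rw [congrArg g h2, map_sum]
      refine Submodule.sum_mem _ fun j _ => ?_
      rw [map_sum]
      refine Submodule.sum_mem _ fun k _ => ?_
      have := hsimple j
      let φ : V j →ₗ[MonoidAlgebra K G] V i :=
        g ∘ₗ (LinearMap.single (MonoidAlgebra K G) (fun j => Fin (m j) → V j) j) ∘ₗ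
          (LinearMap.single (MonoidAlgebra K G) (fun _ => V j) k)
      have hφ : g (Pi.single j (Pi.single k (v j k))) = φ (v j k) := rfl
      rw [hφ]
      clear_value φ
      by_cases hji : j = i
      · subst hji
        obtain ⟨c, hc⟩ := (IsSimpleModule.algebraMap_end_bijective_of_isAlgClosed
          (A := MonoidAlgebra K G) (V := V j) K).2 φ
        rw [← hc]
        exact Submodule.smul_mem _ c (Submodule.subset_span ⟨k, rfl⟩)
      · rcases LinearMap.bijective_or_eq_zero φ with hb | h0
        · exact (hnoniso j i hji ⟨LinearEquiv.ofBijective φ hb⟩).elim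
        · rw [h0]; exact Submodule.zero_mem _
    · rw [Submodule.span_le]
      rintro _ ⟨k, rfl⟩
      exact ⟨(LinearMap.proj k ∘ₗ LinearMap.proj i) ∘ₗ N.subtype, rfl⟩
  rw [← hrange]
  exact (LinearMap.finrank_range_of_inj hev).symm
end

section
/- Let K be an algebraically closed field of characteristic 0, G a finite group, V a simple K[G]-module, m a natural number, and v = (v₁, …, v_m) ∈ V^{⊕ m}. Then the K-dimension of the cyclic K[G]-submodule K[G]·v of V^{⊕ m} generated by v equals dim_K (Span_K{v₁, …, v_m}) · dim_K V. -/
/-- **Dimension of a cyclic submodule of `V^{⊕ m}`.** Let `K` be an algebraically closed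
field of characteristic 0, `G` a finite group, `V` a simple `K[G]`-module, and
`v = (v₁, …, v_m) ∈ V^{⊕ m}`. Then the `K`-dimension of the cyclic `K[G]`-submodule
generated by `v` equals `dim_K (Span_K {v₁, …, v_m}) · dim_K V`. -/
theorem finrank_cyclic_submodule_of_simple_pow
    (K : Type) [Field K] [IsAlgClosed K] [CharZero K]
    (G : Type) [Group G] [Finite G]
    (V : Type) [AddCommGroup V] [Module K V]
    [Module (MonoidAlgebra K G) V] [IsScalarTower K (MonoidAlgebra K G) V]
    (hV : IsSimpleModule (MonoidAlgebra K G) V)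
    (m : ℕ) (v : Fin m → V) :
    Module.finrank K
        ↥(Submodule.span (MonoidAlgebra K G) ({v} : Set (Fin m → V)))
      = Module.finrank K ↥(Submodule.span K (Set.range v)) * Module.finrank K V := by
  classical
  have : FiniteDimensional K (MonoidAlgebra K G) := inferInstance
  have : Module.Finite (MonoidAlgebra K G) V := inferInstance
  have : FiniteDimensional K V := Module.Finite.trans (MonoidAlgebra K G) V
  have dens : ∀ f : V →ₗ[K] V, ∃ r : MonoidAlgebra K G, ∀ i, f (v i) = r • v i := by
    intro f
    let F : Module.End (Module.End (MonoidAlgebra K G) V) V :=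
      { toFun := f
        map_add' := f.map_add
        map_smul' := by
          intro e x
          obtain ⟨c, rfl⟩ := (IsSimpleModule.algebraMap_end_bijective_of_isAlgClosed
            (A := MonoidAlgebra K G) (V := V) K).2 e
          simp }
    obtain ⟨r, hr⟩ := jacobson_density F (Finset.univ.image v)
    exact ⟨r, fun i => hr (v i) (by simp)⟩
  let W := Submodule.span K (Set.range v)
  let w : Fin m → W := fun i => ⟨v i, Submodule.subset_span ⟨i, rfl⟩⟩
  let φ : (W →ₗ[K] V) →ₗ[K] (Fin m → V) := LinearMap.pi fun i => LinearMap.applyₗ (w i)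
  have hφ : ∀ f i, φ f i = f (w i) := fun _ _ => rfl
  have inj : Function.Injective φ := by
    intro f g h
    refine LinearMap.ext fun x => ?_
    obtain ⟨x, hx⟩ := x
    induction hx using Submodule.span_induction with
    | mem x hx => obtain ⟨i, rfl⟩ := hx; exact congrFun h i
    | zero => exact (map_zero f).trans (map_zero g).symm
    | add x y hx hy h1 h2 =>
      have := congrArg₂ (· + ·) h1 h2
      simp only [← map_add] at this
      exact this
    | smul c x hx h1 =>
      have := congrArg (c • ·) h1
      simp only [← map_smul] at this
      exact this
  have rng : LinearMap.range φ =
      (Submodule.span (MonoidAlgebra K G) ({v} : Set (Fin m → V))).restrictScalars K := by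
    ext y
    rw [Submodule.restrictScalars_mem, Submodule.mem_span_singleton]
    constructor
    · rintro ⟨f, rfl⟩
      obtain ⟨g, hg⟩ := LinearMap.exists_extend f
      obtain ⟨r, hr⟩ := dens g
      refine ⟨r, funext fun i => ?_⟩
      rw [hφ, ← hg]
      exact (hr i).symm
    · rintro ⟨r, rfl⟩
      refine ⟨(Algebra.lsmul K K V r).comp W.subtype, ?_⟩
      ext i
      rfl
  have h := LinearMap.finrank_range_of_inj inj
  rw [rng, Module.finrank_linearMap] at h
  exact h
end

section
/- Let K be an algebraically closed field of characteristic 0 and G a finite group. Let V₁, …, V_q be pairwise non-isomorphic simple K[G]-modules, let m₁, …, m_q be natural numbers, let M = ⊕_{i=1}^{q} V_i^{⊕ m_i}, and let v ∈ M have components v^i_j ∈ V_i for 1 ≤ i ≤ q, 1 ≤ j ≤ m_i. Then the cyclic submodule K[G]·v equals all of M if and only if for every i the family (v^i_1, …, v^i_{m_i}) is linearly independent over K (in particular this forces m_i ≤ dim_K V_i for all i). -/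
/-- **Cyclicity criterion.** Let `K` be an algebraically closed field of characteristic 0,
`G` a finite group, `V₁, …, V_q` pairwise non-isomorphic simple `K[G]`-modules, and
`M = ⊕ᵢ Vᵢ^{⊕ mᵢ}` (realized as `Π i, Fin (m i) → V i`). For `v ∈ M` with components
`v i j ∈ V i`, the cyclic submodule `K[G]·v` equals all of `M` if and only if for every `i`
the family `(v i 1, …, v i mᵢ)` is linearly independent over `K`. -/
theorem cyclic_submodule_eq_top_iff_linearIndependent
    (K : Type) [Field K] [IsAlgClosed K] [CharZero K]
    (G : Type) [Group G] [Finite G]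
    (q : ℕ) (V : Fin q → Type)
    [∀ i, AddCommGroup (V i)] [∀ i, Module K (V i)]
    [∀ i, Module (MonoidAlgebra K G) (V i)]
    [∀ i, IsScalarTower K (MonoidAlgebra K G) (V i)]
    (hsimple : ∀ i, IsSimpleModule (MonoidAlgebra K G) (V i))
    (hnoniso : ∀ i j, i ≠ j → ¬ Nonempty (V i ≃ₗ[MonoidAlgebra K G] V j))
    (m : Fin q → ℕ)
    (v : (i : Fin q) → Fin (m i) → V i) :
    Submodule.span (MonoidAlgebra K G)
        ({v} : Set ((i : Fin q) → Fin (m i) → V i)) = ⊤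
      ↔ ∀ i, LinearIndependent K (v i) := by
  classical
  have hcomm : ∀ i, SMulCommClass (MonoidAlgebra K G) K (V i) := fun i =>
    IsScalarTower.to_smulCommClass'
  have hfin : ∀ i, Module.Finite K (V i) := fun i => by
    have : Module.Finite K (MonoidAlgebra K G) := by
      exact Module.Finite.equiv (MonoidAlgebra.coeffLinearEquiv K :
        MonoidAlgebra K G ≃ₗ[K] G →₀ K).symm
    exact Module.Finite.trans (MonoidAlgebra K G) (V i)
  constructor
  · intro htop i
    rw [Fintype.linearIndependent_iff]
    intro c hc j
    let f : ((i : Fin q) → Fin (m i) → V i) →ₗ[MonoidAlgebra K G] V i :=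
      { toFun := fun w => ∑ j, c j • w i j
        map_add' := fun x y => by simp [Finset.sum_add_distrib]
        map_smul' := fun r x => by 
          simp only [Pi.smul_apply, Finset.smul_sum, RingHom.id_apply]
          exact Finset.sum_congr rfl fun k _ => smul_comm _ _ _ }
    have hle : Submodule.span (MonoidAlgebra K G)
        ({v} : Set ((i : Fin q) → Fin (m i) → V i)) ≤ LinearMap.ker f := by
      rw [Submodule.span_singleton_le_iff_mem]
      exact hc
    rw [htop, top_le_iff, LinearMap.ker_eq_top] at hle
    have := IsSimpleModule.nontrivial (MonoidAlgebra K G) (V i)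
    obtain ⟨x, hx⟩ := exists_ne (0 : V i)
    have h1 : f (Pi.single i (Pi.single j x)) = 0 := by rw [hle]; rfl
    have h2 : f (Pi.single i (Pi.single j x)) = c j • x := by
      change ∑ k, c k • (Pi.single i (Pi.single j x) : (i : Fin q) → Fin (m i) → V i) i k = _
      rw [Finset.sum_eq_single j]
      · simp
      · intro b _ hb
        simp [hb]
      · simp
    rw [h2] at h1
    exact (smul_eq_zero.mp h1).resolve_right hx
  · intro hli
    have : NeZero (Nat.card G : K) := ⟨by simp [Nat.card_pos.ne']⟩
    by_contra hne
    obtain ⟨N, hN⟩ := exists_isCompl (Submodule.span (MonoidAlgebra K G)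
        ({v} : Set ((i : Fin q) → Fin (m i) → V i)))
    let p := N.projectionOnto _ hN.symm
    have hpv : p v = 0 := by
      rw [← LinearMap.mem_ker, Submodule.ker_projectionOnto]
      exact Submodule.mem_span_singleton_self v
    have hp : p ≠ 0 := by
      intro h
      apply hne
      rw [← Submodule.ker_projectionOnto hN.symm]
      exact LinearMap.ker_eq_top.mpr h
    apply hp
    have key : ∀ (i : Fin q) (f : ((i : Fin q) → Fin (m i) → V i) →ₗ[MonoidAlgebra K G] V i),
        f v = 0 → f = 0 := by
      intro i f hf
      let g : ∀ k, Fin (m k) → (V k →ₗ[MonoidAlgebra K G] V i) := fun k j =>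
        f ∘ₗ LinearMap.single _ (fun k => Fin (m k) → V k) k ∘ₗ
          LinearMap.single _ (fun _ => V k) j
      have hsum : ∀ w, f w = ∑ k, ∑ j, g k j (w k j) := by
        intro w
        have hw : w = ∑ k, ∑ j, Pi.single k (Pi.single j (w k j)) := by
          conv_lhs => rw [← Finset.univ_sum_single w]
          refine Finset.sum_congr rfl fun k _ => ?_
          conv_lhs => rw [← Finset.univ_sum_single (w k)]
          exact map_sum (LinearMap.single (MonoidAlgebra K G) (fun k => Fin (m k) → V k) k) _ _
        conv_lhs => rw [hw]
        simp only [map_sum]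
        rfl
      have hg0 : ∀ k, k ≠ i → ∀ j, g k j = 0 := by
        intro k hk j
        rcases LinearMap.bijective_or_eq_zero (g k j) with h | h
        · exact (hnoniso k i hk ⟨LinearEquiv.ofBijective _ h⟩).elim
        · exact h
      have hsc : ∀ j, ∃ c : K, ∀ x, g i j x = c • x := by
        intro j
        obtain ⟨c, hc⟩ :=
          (IsSimpleModule.algebraMap_end_bijective_of_isAlgClosed K
            (A := MonoidAlgebra K G) (V := V i)).2 (g i j)
        exact ⟨c, fun x => by rw [← hc]; rfl⟩
      choose c hc using hsc
      have hsum' : ∀ w, f w = ∑ j, c j • w i j := by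
        intro w
        rw [hsum, Finset.sum_eq_single i]
        · simp [hc]
        · intro k _ hk
          simp [hg0 k hk]
        · simp
      have hc0 := Fintype.linearIndependent_iff.mp (hli i) c (by rw [← hsum', hf])
      refine LinearMap.ext fun w => ?_
      rw [hsum']
      simp [hc0]
    refine LinearMap.ext fun w => ?_
    apply Subtype.ext
    funext i j
    have := key i (LinearMap.proj j ∘ₗ LinearMap.proj i ∘ₗ N.subtype ∘ₗ p) (by simp [hpv])
    exact LinearMap.congr_fun this w
end

section
/- Let K be an algebraically closed field of characteristic 0, G a finite group, U a simple K[G]-module, and m ≥ 1. Let u = (u₁, …, u_m) and v = (v₁, …, v_m) be elements of U^{⊕ m} such that both families (u₁, …, u_m) and (v₁, …, v_m) are linearly independent over K. Then there exist a K[G]-module automorphism φ of U^{⊕ m} and a nonzero scalar c ∈ K with φ(u) = c · v if and only if Span_K{u₁, …, u_m} = Span_K{v₁, …, v_m}. -/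
theorem glider_aux_le
    {K : Type} [Field K] [IsAlgClosed K] {A : Type} [Ring A] [Algebra K A] [FiniteDimensional K A]
    {U : Type} [AddCommGroup U] [Module K U] [Module A U] [IsScalarTower K A U]
    [IsSimpleModule A U] {m : ℕ} (u v : Fin m → U)
    (φ : (Fin m → U) →ₗ[A] (Fin m → U)) (c : K) (hc : c ≠ 0) (h : φ u = c • v) :
    Submodule.span K (Set.range v) ≤ Submodule.span K (Set.range u) := by
  haveI : Module.Finite A U := inferInstance
  haveI : FiniteDimensional K U := Module.Finite.trans A U
  rw [Submodule.span_le]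
  rintro _ ⟨i, rfl⟩
  have h1 : c • v i ∈ Submodule.span K (Set.range u) := by
    have h2 : c • v i = φ u i := by rw [h]; rfl
    have h3 : u = ∑ j, Pi.single j (u j) := (Finset.univ_sum_single u).symm
    rw [h2, h3, map_sum, Finset.sum_apply, ← h3]
    refine Submodule.sum_mem _ fun j _ => ?_
    let f : Module.End A U := (LinearMap.proj i) ∘ₗ φ ∘ₗ (LinearMap.single A (fun _ => U) j)
    obtain ⟨a, ha⟩ := (IsSimpleModule.algebraMap_end_bijective_of_isAlgClosed (A := A) (V := U) K).2 f
    have h4 : φ (Pi.single j (u j)) i = a • u j := by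
      change f (u j) = _
      rw [← ha]; rfl
    rw [h4]
    exact Submodule.smul_mem _ _ (Submodule.subset_span ⟨j, rfl⟩)
  have := Submodule.smul_mem _ c⁻¹ h1
  rwa [inv_smul_smul₀ hc] at this

theorem glider_aux_inv
    {K : Type} [Field K]
    {U : Type} [AddCommGroup U] [Module K U] {m : ℕ} (u v : Fin m → U)
    (hu : LinearIndependent K u) (a b : Fin m → Fin m → K)
    (ha : ∀ i, ∑ j, a i j • u j = v i) (hb : ∀ i, ∑ j, b i j • v j = u i)
    (x : Fin m → U) (i : Fin m) : ∑ j, b i j • ∑ k, a j k • x k = x i := by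
  have key : ∀ y : Fin m → U, ∑ j, b i j • ∑ k, a j k • y k = ∑ k, (∑ j, b i j * a j k) • y k := by
    intro y
    simp only [Finset.smul_sum, Finset.sum_smul, smul_smul]
    exact Finset.sum_comm
  have h1 : ∑ k, (∑ j, b i j * a j k) • u k = ∑ k, (if i = k then (1 : K) else 0) • u k := by
    rw [← key]
    simp [ha, hb]
  have h2 : ∀ k, (∑ j, b i j * a j k) = if i = k then (1 : K) else 0 := by
    intro k
    have := Fintype.linearIndependent_iff.1 hu
      (fun k => (∑ j, b i j * a j k) - if i = k then (1 : K) else 0)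
      (by simp only [sub_smul, Finset.sum_sub_distrib]; rw [h1, sub_self]) k
    exact sub_eq_zero.1 this
  rw [key]
  simp [h2]

/-- The endomorphism of `U^m` given by a scalar matrix. -/
def gliderMat {K : Type} [Field K] (A : Type) [Ring A] [Algebra K A]
    {U : Type} [AddCommGroup U] [Module K U] [Module A U] [IsScalarTower K A U]
    {m : ℕ} (a : Fin m → Fin m → K) : (Fin m → U) →ₗ[A] (Fin m → U) where
  toFun x i := ∑ j, a i j • x j
  map_add' x y := by
    funext i
    simp [Finset.sum_add_distrib]
  map_smul' r x := by
    haveI : SMulCommClass K A U := IsScalarTower.to_smulCommClass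
    funext i
    simp [Finset.smul_sum, smul_comm r]


/-- **Grassmannian criterion for isomorphism of irreducible glider representations.**
Let `K` be an algebraically closed field of characteristic 0, `G` a finite group, `U` a
simple `K[G]`-module, `m ≥ 1`, and `u = (u₁, …, u_m)`, `v = (v₁, …, v_m)` elements of
`U^{⊕ m}` whose component families are linearly independent over `K`. Then there is a
`K[G]`-module automorphism `φ` of `U^{⊕ m}` and a nonzero scalar `c` with `φ(u) = c • v`
if and only if `Span_K {u₁, …, u_m} = Span_K {v₁, …, v_m}`. -/
theorem glider_iso_iff_span_eq
    (K : Type) [Field K] [IsAlgClosed K] [CharZero K]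
    (G : Type) [Group G] [Finite G]
    (U : Type) [AddCommGroup U] [Module K U]
    [Module (MonoidAlgebra K G) U] [IsScalarTower K (MonoidAlgebra K G) U]
    (hU : IsSimpleModule (MonoidAlgebra K G) U)
    (m : ℕ) (hm : 1 ≤ m)
    (u v : Fin m → U)
    (hu : LinearIndependent K u) (hv : LinearIndependent K v) :
    (∃ (φ : (Fin m → U) ≃ₗ[MonoidAlgebra K G] (Fin m → U)) (c : K),
        c ≠ 0 ∧ φ u = c • v)
      ↔ Submodule.span K (Set.range u) = Submodule.span K (Set.range v) := by
  haveI := hU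
  haveI := Fintype.ofFinite G
  haveI : FiniteDimensional K (MonoidAlgebra K G) := inferInstance
  constructor
  · rintro ⟨φ, c, hc, h⟩
    apply le_antisymm
    · refine glider_aux_le v u φ.symm.toLinearMap c⁻¹ (inv_ne_zero hc) ?_
      change φ.symm v = _
      rw [LinearEquiv.symm_apply_eq]
      have h1 : φ (c⁻¹ • u) = c⁻¹ • φ u := by
        rw [← algebraMap_smul (MonoidAlgebra K G) c⁻¹ u, map_smul, algebraMap_smul]
      rw [h1, h, inv_smul_smul₀ hc]
    · exact glider_aux_le u v φ.toLinearMap c hc h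
  · intro h
    have hv1 : ∀ i, ∃ a : Fin m → K, ∑ j, a j • u j = v i := fun i =>
      (Submodule.mem_span_range_iff_exists_fun K).1 (h ▸ Submodule.subset_span ⟨i, rfl⟩)
    have hu1 : ∀ i, ∃ a : Fin m → K, ∑ j, a j • v j = u i := fun i =>
      (Submodule.mem_span_range_iff_exists_fun K).1 (h ▸ Submodule.subset_span ⟨i, rfl⟩)
    choose a ha using hv1
    choose b hb using hu1
    refine ⟨LinearEquiv.ofLinear (gliderMat (MonoidAlgebra K G) a)
      (gliderMat (MonoidAlgebra K G) b) ?_ ?_, 1, one_ne_zero, ?_⟩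
    · refine LinearMap.ext fun x => funext fun i => ?_
      exact glider_aux_inv v u hv b a hb ha x i
    · refine LinearMap.ext fun x => funext fun i => ?_
      exact glider_aux_inv u v hu a b ha hb x i
    · rw [one_smul]
      exact funext ha
end

section
/- Let K be a field of characteristic 0, G a finite group, and let ρ and σ be representations of G on K-vector spaces M and N respectively. For a group homomorphism χ : G → Kˣ define the averaging operator p_χ^ρ = |G|⁻¹ · Σ_{g ∈ G} χ(g)⁻¹ · ρ(g) ∈ End_K(M), and similarly on N and on M ⊗ N for the tensor product representation ρ ⊗ σ (where g acts by ρ(g) ⊗ σ(g)). If u ∈ M satisfies p_χ^ρ(u) ≠ 0 and v ∈ N satisfies p_ψ^σ(v) ≠ 0, for homomorphisms χ, ψ : G → Kˣ, then p_{χψ}^{ρ⊗σ}(u ⊗ v) ≠ 0. -/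
open scoped TensorProduct

/-- The averaging operator `p_χ^ρ = |G|⁻¹ ∑_{g ∈ G} χ(g)⁻¹ ρ(g)`, projecting onto the
`χ`-isotypic component of a representation `ρ` of a finite group `G`. -/
noncomputable def avgProj {K G M : Type*} [Field K] [Group G] [Fintype G]
    [AddCommGroup M] [Module K M]
    (ρ : Representation K G M) (χ : G →* Kˣ) : M →ₗ[K] M :=
  (Fintype.card G : K)⁻¹ • ∑ g : G, (((χ g)⁻¹ : Kˣ) : K) • (ρ g)

theorem avgProj_apply_rep {K G M : Type*} [Field K] [Group G] [Fintype G]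
    [AddCommGroup M] [Module K M]
    (ρ : Representation K G M) (χ : G →* Kˣ) (h : G) (u : M) :
    avgProj ρ χ (ρ h u) = ((χ h : Kˣ) : K) • avgProj ρ χ u := by
  simp only [avgProj, LinearMap.smul_apply, LinearMap.sum_apply]
  rw [smul_comm]
  congr 1
  rw [Finset.smul_sum, ← Equiv.sum_comp (Equiv.mulRight h)
    (fun g => ((χ h : Kˣ) : K) • ((((χ g)⁻¹ : Kˣ) : K) • ρ g u))]
  refine Finset.sum_congr rfl fun g _ => ?_
  simp [smul_smul, map_mul]

/-- If `p_χ^ρ(u) ≠ 0` and `p_ψ^σ(v) ≠ 0`, then for the tensor product representation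
(diagonal `G`-action) one has `p_{χψ}^{ρ ⊗ σ}(u ⊗ v) ≠ 0`. -/
theorem avgProj_tprod_ne_zero {K G M N : Type} [Field K] [CharZero K]
    [Group G] [Fintype G]
    [AddCommGroup M] [Module K M] [AddCommGroup N] [Module K N]
    (ρ : Representation K G M) (σ : Representation K G N)
    (χ ψ : G →* Kˣ) (u : M) (v : N)
    (hu : avgProj ρ χ u ≠ 0) (hv : avgProj σ ψ v ≠ 0) :
    avgProj (ρ.tprod σ) (χ * ψ) (u ⊗ₜ[K] v) ≠ 0 := by
  obtain ⟨f, hf⟩ : ∃ f : Module.Dual K M, f (avgProj ρ χ u) ≠ 0 := by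
    by_contra! h
    exact hu ((Module.forall_dual_apply_eq_zero_iff K _).1 h)
  obtain ⟨k, hk⟩ : ∃ f : Module.Dual K N, f (avgProj σ ψ v) ≠ 0 := by
    by_contra! h
    exact hv ((Module.forall_dual_apply_eq_zero_iff K _).1 h)
  intro h0
  rw [avgProj] at h0
  have h1 := congrArg (LinearMap.mul' K K ∘ₗ
    TensorProduct.map (f ∘ₗ avgProj ρ χ) (k ∘ₗ avgProj σ ψ)) h0
  rw [map_zero] at h1
  have hc : (Fintype.card G : K) ≠ 0 := Nat.cast_ne_zero.2 Fintype.card_ne_zero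
  simp only [LinearMap.smul_apply, LinearMap.sum_apply, map_smul, map_sum,
    Representation.tprod_apply, TensorProduct.map_tmul, LinearMap.comp_apply,
    LinearMap.mul'_apply, avgProj_apply_rep] at h1
  have h2 : ∀ g : G, ((((χ * ψ) g)⁻¹ : Kˣ) : K) •
      ((((χ g : Kˣ) : K) • f (avgProj ρ χ u)) * (((ψ g : Kˣ) : K) • k (avgProj σ ψ v)))
      = f (avgProj ρ χ u) * k (avgProj σ ψ v) := by
    intro g
    have a := (χ g).ne_zero
    have b := (ψ g).ne_zero
    simp only [MonoidHom.mul_apply, Units.val_inv_eq_inv_val, Units.val_mul, smul_eq_mul]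
    field_simp
  simp only [smul_eq_mul] at h1 h2
  simp only [h2, Finset.sum_const, Finset.card_univ, nsmul_eq_mul] at h1
  rw [inv_mul_cancel_left₀ hc] at h1
  exact mul_ne_zero hf hk h1
end

section
/- Let K be an algebraically closed field of characteristic 0 and G a finite group. Let M, N, N' be finite-dimensional K[G]-modules, u ∈ M, w ∈ N, w' ∈ N'. Then for every simple K[G]-module W, the multiplicity of W in the cyclic submodule of M ⊗ (N ⊕ N') generated by u ⊗ (w, 0) is at most the multiplicity of W in the cyclic submodule of M ⊗ (N ⊕ N') generated by u ⊗ (w, w'); that is, dim_K Hom_{K[G]}(W, K[G]·(u ⊗ (w,0))) ≤ dim_K Hom_{K[G]}(W, K[G]·(u ⊗ (w,w'))). -/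
open scoped TensorProduct

/-- The direct sum of two representations of `G`. -/
def prodRep {k G M N : Type*} [CommSemiring k] [Monoid G]
    [AddCommMonoid M] [Module k M] [AddCommMonoid N] [Module k N]
    (ρ : Representation k G M) (σ : Representation k G N) :
    Representation k G (M × N) where
  toFun g := (ρ g).prodMap (σ g)
  map_one' := by
    apply LinearMap.ext
    rintro ⟨x, y⟩
    simp
  map_mul' g h := by
    apply LinearMap.ext
    rintro ⟨x, y⟩
    simp

/-- The cyclic `K[G]`-submodule generated by a vector `x`: the `K`-span of the
`G`-orbit of `x`. -/
def cyclicSubmodule {k G X : Type*} [CommSemiring k] [Monoid G]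
    [AddCommMonoid X] [Module k X] (τ : Representation k G X) (x : X) :
    Submodule k X :=
  Submodule.span k (Set.range fun g => τ g x)

/-- The space `Hom_{K[G]}(W, N)` of equivariant linear maps from `W` to `X` whose image is
contained in the submodule `N` of `X`, as a `k`-submodule of `W →ₗ[k] X`. -/
def equivHomInto {k G W X : Type*} [CommSemiring k] [Monoid G]
    [AddCommMonoid W] [Module k W] [AddCommMonoid X] [Module k X]
    (σ : Representation k G W) (τ : Representation k G X) (N : Submodule k X) :
    Submodule k (W →ₗ[k] X) where
  carrier := {f | (∀ (g : G) (w : W), f (σ g w) = τ g (f w)) ∧ ∀ w : W, f w ∈ N}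
  add_mem' := by
    intro f g hf hg
    refine ⟨fun g' w => ?_, fun w => ?_⟩
    · simp [hf.1, hg.1]
    · exact N.add_mem (hf.2 w) (hg.2 w)
  zero_mem' := by
    exact ⟨fun g w => by simp, fun w => by simp⟩
  smul_mem' := by
    intro c f hf
    refine ⟨fun g w => ?_, fun w => ?_⟩
    · simp [hf.1]
    · exact N.smul_mem c (hf.2 w)

/-- Averaging lemma: an equivariant endomorphism carrying one vector to another admits an
equivariant section between the corresponding cyclic submodules. -/
theorem exists_equivariant_section {K G X : Type} [Field K] [CharZero K] [Group G] [Finite G]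
    [AddCommGroup X] [Module K X] (τ : Representation K G X) (p : X →ₗ[K] X)
    (hp : ∀ g y, p (τ g y) = τ g (p y)) (x x' : X) (hx : p x' = x) :
    ∃ s : X →ₗ[K] X, (∀ g y, s (τ g y) = τ g (s y)) ∧
      (∀ y ∈ cyclicSubmodule τ x, s y ∈ cyclicSubmodule τ x') ∧
      (∀ y ∈ cyclicSubmodule τ x, p (s y) = y) := by
  have inv : ∀ (z : X) (g : G), ∀ y ∈ cyclicSubmodule τ z, τ g y ∈ cyclicSubmodule τ z := by
    intro z g y hy
    unfold cyclicSubmodule at *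
    induction hy using Submodule.span_induction with
    | mem y hy =>
      obtain ⟨h, rfl⟩ := hy
      exact Submodule.subset_span ⟨g * h, by simp⟩
    | zero => simp
    | add a b _ _ ha hb => rw [map_add]; exact add_mem ha hb
    | smul c a _ ha => rw [map_smul]; exact Submodule.smul_mem _ _ ha
  have hmap : (cyclicSubmodule τ x').map p = cyclicSubmodule τ x := by
    unfold cyclicSubmodule
    rw [Submodule.map_span, ← Set.range_comp]
    congr 2
    funext g
    simp [hp, hx]
  have hq : ∀ y ∈ cyclicSubmodule τ x', p y ∈ cyclicSubmodule τ x := fun y hy =>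
    hmap ▸ Submodule.mem_map_of_mem hy
  obtain ⟨s1, hs1⟩ := (p.restrict hq).exists_rightInverse_of_surjective (by
    rw [LinearMap.range_eq_top]
    rintro ⟨y, hy⟩
    have hy' := hy
    rw [← hmap] at hy'
    obtain ⟨a, ha, rfl⟩ := hy'
    exact ⟨⟨a, ha⟩, rfl⟩)
  obtain ⟨s2, hs2⟩ := LinearMap.exists_extend ((cyclicSubmodule τ x').subtype ∘ₗ s1)
  have e1 : ∀ y (hy : y ∈ cyclicSubmodule τ x), s2 y = s1 ⟨y, hy⟩ := fun y hy =>
    LinearMap.congr_fun hs2 ⟨y, hy⟩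
  have m2 : ∀ y ∈ cyclicSubmodule τ x, s2 y ∈ cyclicSubmodule τ x' := fun y hy => by
    rw [e1 y hy]; exact (s1 ⟨y, hy⟩).2
  have p2 : ∀ y ∈ cyclicSubmodule τ x, p (s2 y) = y := fun y hy => by
    rw [e1 y hy]
    exact congrArg Subtype.val (LinearMap.congr_fun hs1 ⟨y, hy⟩)
  have := Fintype.ofFinite G
  have ev : ∀ y, ((Fintype.card G : K)⁻¹ • ∑ g : G, τ g ∘ₗ s2 ∘ₗ τ g⁻¹ : X →ₗ[K] X) y
      = (Fintype.card G : K)⁻¹ • ∑ g : G, τ g (s2 (τ g⁻¹ y)) := fun y => by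
    simp [LinearMap.sum_apply]
  refine ⟨(Fintype.card G : K)⁻¹ • ∑ g : G, τ g ∘ₗ s2 ∘ₗ τ g⁻¹, ?_, ?_, ?_⟩
  · intro h y
    rw [ev, ev, map_smul, map_sum]
    congr 1
    rw [← Equiv.sum_comp (Equiv.mulLeft h)]
    refine Finset.sum_congr rfl fun g _ => ?_
    have h1 : τ (h * g)⁻¹ (τ h y) = τ g⁻¹ y := by
      rw [← Module.End.mul_apply, ← map_mul]
      simp
    rw [Equiv.coe_mulLeft, h1, map_mul, Module.End.mul_apply]
  · intro y hy
    rw [ev]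
    exact Submodule.smul_mem _ _ (Submodule.sum_mem _ fun g _ => inv _ _ _ (m2 _ (inv _ _ _ hy)))
  · intro y hy
    rw [ev, map_smul, map_sum]
    have : ∀ g : G, p (τ g (s2 (τ g⁻¹ y))) = y := fun g => by
      rw [hp, p2 _ (inv _ _ _ hy)]
      simp
    simp only [this]
    rw [Finset.sum_const, Finset.card_univ, ← Nat.cast_smul_eq_nsmul K, smul_smul,
      inv_mul_cancel₀ (by exact_mod_cast Fintype.card_ne_zero), one_smul]

/-- **Monotonicity of multiplicities.** For finite-dimensional `K[G]`-modules `M, N, N'`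
over an algebraically closed field `K` of characteristic 0 with `G` finite, and vectors
`u ∈ M`, `w ∈ N`, `w' ∈ N'`, the multiplicity of any simple `K[G]`-module `W` in the
cyclic submodule of `M ⊗ (N ⊕ N')` generated by `u ⊗ (w, 0)` is at most its multiplicity
in the cyclic submodule generated by `u ⊗ (w, w')`. (The multiplicity is the `K`-dimension
of the space of equivariant maps from `W` into the corresponding cyclic submodule.) -/
theorem multiplicity_cyclic_mono
    (K : Type) [Field K] [IsAlgClosed K] [CharZero K]
    (G : Type) [Group G] [Finite G]
    (M N N' W : Type)
    [AddCommGroup M] [Module K M] [FiniteDimensional K M]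
    [AddCommGroup N] [Module K N] [FiniteDimensional K N]
    [AddCommGroup N'] [Module K N'] [FiniteDimensional K N']
    [AddCommGroup W] [Module K W]
    (ρM : Representation K G M) (ρN : Representation K G N)
    (ρN' : Representation K G N')
    (σ : Representation K G W)
    (hW : IsSimpleModule (MonoidAlgebra K G) σ.asModule)
    (u : M) (w : N) (w' : N') :
    Cardinal.toNat (Module.rank K
        ↥(equivHomInto σ (ρM.tprod (prodRep ρN ρN'))
            (cyclicSubmodule (ρM.tprod (prodRep ρN ρN')) (u ⊗ₜ[K] ((w, 0) : N × N')))))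
      ≤ Cardinal.toNat (Module.rank K
        ↥(equivHomInto σ (ρM.tprod (prodRep ρN ρN'))
            (cyclicSubmodule (ρM.tprod (prodRep ρN ρN')) (u ⊗ₜ[K] ((w, w') : N × N'))))) := by
  have hfin : Module.Finite K W := by
    have h1 : Module.Finite (MonoidAlgebra K G) σ.asModule := inferInstance
    have h2 : Module.Finite K (MonoidAlgebra K G) := inferInstance
    exact (Module.Finite.trans (MonoidAlgebra K G) σ.asModule : Module.Finite K σ.asModule)
  set τ := ρM.tprod (prodRep ρN ρN') with hτ
  let p : M ⊗[K] (N × N') →ₗ[K] M ⊗[K] (N × N') :=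
    LinearMap.lTensor M ((LinearMap.inl K N N') ∘ₗ (LinearMap.fst K N N'))
  obtain ⟨s, hs, hm, hps⟩ := exists_equivariant_section τ p (by
    intro g y
    induction y with
    | zero => simp
    | add a b ha hb => simp only [map_add, ha, hb]
    | tmul a b => simp [p, hτ, prodRep]) (u ⊗ₜ[K] ((w, 0) : N × N'))
      (u ⊗ₜ[K] ((w, w') : N × N')) (by simp [p])
  change Module.finrank K _ ≤ Module.finrank K _
  let F := (LinearMap.compRight K (M := W) s).restrict
    (p := equivHomInto σ τ (cyclicSubmodule τ (u ⊗ₜ[K] ((w, 0) : N × N'))))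
    (q := equivHomInto σ τ (cyclicSubmodule τ (u ⊗ₜ[K] ((w, w') : N × N'))))
    (fun f hf => ⟨fun g v => by simp [hf.1 g v, hs], fun v => hm _ (hf.2 v)⟩)
  refine LinearMap.finrank_le_finrank_of_injective (f := F) ?_
  rintro ⟨f, hf⟩ ⟨f', hf'⟩ h
  apply Subtype.ext
  apply LinearMap.ext
  intro v
  have h2 : s (f v) = s (f' v) := LinearMap.congr_fun (congrArg Subtype.val h) v
  change f v = f' v
  rw [← hps _ (hf.2 v), h2, hps _ (hf'.2 v)]
end

section
/- Let G be a finite nilpotent group and M a finite-dimensional complex representation of G generated by a vector u (i.e. ℂ[G]·u = M). Assume: (i) M contains a nonzero G-fixed vector (a trivial subrepresentation); (ii) every one-dimensional subrepresentation of M is trivial (G acts trivially on it); and (iii) there exists an isomorphism of ℂ[G]-modules φ from the cyclic submodule ℂ[G]·(u ⊗ u) of M ⊗ M onto M such that φ(u ⊗ u) = c·u for some nonzero scalar c ∈ ℂ. Then dim_ℂ M = 1 and G acts trivially on M. -/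
open scoped TensorProduct

/-- In a vector space with a linear map `D : M → M ⊗ M`, the nonzero elements with
`D x = x ⊗ x` are linearly independent. -/
theorem glider_linearIndepOn {M : Type} [AddCommGroup M] [Module ℂ M]
    (D : M →ₗ[ℂ] M ⊗[ℂ] M) :
    LinearIndepOn ℂ id {x : M | x ≠ 0 ∧ D x = x ⊗ₜ[ℂ] x} := by
  classical
  rw [linearIndepOn_iff_linearIndepOn_finset]
  intro s hs
  induction s using Finset.cons_induction with
  | empty => simp
  | cons a s has ih =>
    simp only [Finset.cons_eq_insert, Finset.coe_insert, Set.insert_subset_iff] at hs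
    obtain ⟨ha, hs⟩ := hs
    specialize ih hs
    rw [Finset.coe_cons]
    refine LinearIndepOn.id_insert ih ?_
    intro hmem
    rw [Submodule.mem_span_finset] at hmem
    obtain ⟨c, -, hc⟩ := hmem
    have hD : a ⊗ₜ[ℂ] a = ∑ x ∈ s, c x • (x ⊗ₜ[ℂ] x) := by
      rw [← ha.2]
      conv_lhs => rw [← hc]
      rw [map_sum]
      refine Finset.sum_congr rfl fun x hx => ?_
      rw [map_smul, (hs hx).2]
    have hzero : ∀ y ∈ s, c y = 0 := by
      intro y hy
      have hn := LinearIndepOn.notMem_span ih (Finset.mem_coe.2 hy)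
      obtain ⟨f, hf, hle⟩ := Submodule.exists_le_ker_of_notMem hn
      have hf0 : ∀ x ∈ s, x ≠ y → f x = 0 := by
        intro x hx hxy
        have : x ∈ Submodule.span ℂ (id '' ((s : Set M) \ {y})) :=
          Submodule.subset_span ⟨x, ⟨hx, hxy⟩, rfl⟩
        exact hle this
      have hfa : f a = c y * f y := by
        rw [← hc, map_sum, Finset.sum_eq_single_of_mem y hy]
        · simp
        · intro x hx hxy
          simp [hf0 x hx hxy]
      have h2 := congrArg (fun t => TensorProduct.lid ℂ M (f.rTensor M t)) hD
      simp only [map_sum, map_smul, LinearMap.rTensor_tmul, TensorProduct.lid_tmul] at h2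
      rw [Finset.sum_eq_single_of_mem y hy] at h2
      · by_contra hcy
        rw [hfa, mul_smul] at h2
        have h3 := smul_right_injective M hcy h2
        have h4 := smul_right_injective M hf h3
        exact has (h4 ▸ hy)
      · intro x hx hxy
        simp [hf0 x hx hxy]
    apply ha.1
    rw [← hc]
    exact Finset.sum_eq_zero fun x hx => by rw [hzero x hx, zero_smul]

/-- A proper subgroup of a finite nilpotent group is killed by a nontrivial linear character. -/
theorem glider_exists_character {G : Type} [Group G] [Finite G] (hnilp : Group.IsNilpotent G)
    (H : Subgroup G) (hH : H ≠ ⊤) :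
    ∃ χ : G →* ℂˣ, (∀ h ∈ H, χ h = 1) ∧ ∃ g, χ g ≠ 1 := by
  obtain ⟨K, hK, hHK⟩ := (eq_top_or_exists_le_coatom H).resolve_left hH
  have hKn : K.Normal :=
    Subgroup.NormalizerCondition.normal_of_coatom _ Group.normalizerCondition_of_isNilpotent hK
  obtain ⟨g, hg⟩ : ∃ g, g ∉ K := by
    by_contra! h
    exact hK.1 ((Subgroup.eq_top_iff' K).2 h)
  have hg1 : (QuotientGroup.mk' K g) ≠ 1 := by
    intro h
    exact hg ((QuotientGroup.eq_one_iff g).1 h)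
  have hnt : Nontrivial (G ⧸ K) := ⟨_, _, hg1⟩
  have hsimple : IsSimpleGroup (G ⧸ K) := by
    constructor
    intro L _
    have hle : K ≤ L.comap (QuotientGroup.mk' K) := by
      intro k hk
      have : QuotientGroup.mk' K k = 1 := (QuotientGroup.eq_one_iff k).2 hk
      rw [Subgroup.mem_comap, this]
      exact L.one_mem
    have hsurj := QuotientGroup.mk'_surjective K
    rcases hK.le_iff.1 hle with h | h
    · right
      rw [eq_top_iff]
      intro x _
      obtain ⟨y, rfl⟩ := hsurj x
      have : y ∈ L.comap (QuotientGroup.mk' K) := h ▸ Subgroup.mem_top y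
      exact this
    · left
      rw [eq_bot_iff]
      intro x hx
      obtain ⟨y, rfl⟩ := hsurj x
      have : y ∈ L.comap (QuotientGroup.mk' K) := hx
      rw [h] at this
      exact (QuotientGroup.eq_one_iff y).2 this
  letI : CommGroup (G ⧸ K) := inferInstance
  obtain ⟨φ, hφ⟩ := CommGroup.exists_apply_ne_one_of_hasEnoughRootsOfUnity (G ⧸ K) ℂ hg1
  refine ⟨φ.comp (QuotientGroup.mk' K), fun h hh => ?_, g, hφ⟩
  have : QuotientGroup.mk' K h = 1 := (QuotientGroup.eq_one_iff h).2 (hHK hh)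
  rw [MonoidHom.comp_apply, this, map_one]

/-- **Idempotent gliders with only trivial linear constituents are trivial.**
Let `G` be a finite nilpotent group and `M` a finite-dimensional complex representation
generated by a vector `u`. Assume: (i) `M` contains a nonzero `G`-fixed vector; (ii) every
one-dimensional subrepresentation of `M` is trivial; (iii) there is an isomorphism of
`ℂ[G]`-modules `e` from the cyclic submodule `ℂ[G]·(u ⊗ u)` of `M ⊗ M` (with the diagonal
action) onto `M` with `e (u ⊗ u) = c • u` for some `c ≠ 0`. Then `dim_ℂ M = 1` and `G`
acts trivially on `M`. -/
theorem idempotent_glider_trivial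
    (G : Type) [Group G] [Finite G] (hnilp : Group.IsNilpotent G)
    (M : Type) [AddCommGroup M] [Module ℂ M] [FiniteDimensional ℂ M]
    (ρ : Representation ℂ G M) (u : M)
    (hgen : Submodule.span ℂ (Set.range fun g => ρ g u) = ⊤)
    (hfix : ∃ x : M, x ≠ 0 ∧ ∀ g : G, ρ g x = x)
    (honedim : ∀ N : Submodule ℂ M, (∀ g : G, ∀ x ∈ N, ρ g x ∈ N) →
      Module.finrank ℂ ↥N = 1 → ∀ g : G, ∀ x ∈ N, ρ g x = x)
    (C : Submodule ℂ (M ⊗[ℂ] M))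
    (hC : C = Submodule.span ℂ (Set.range fun g => (ρ.tprod ρ) g (u ⊗ₜ[ℂ] u)))
    (e : ↥C ≃ₗ[ℂ] M) (c : ℂ) (hc : c ≠ 0)
    (hequiv : ∀ (g : G) (x : M ⊗[ℂ] M) (hx : x ∈ C) (hgx : (ρ.tprod ρ) g x ∈ C),
      e ⟨(ρ.tprod ρ) g x, hgx⟩ = ρ g (e ⟨x, hx⟩))
    (heu : ∀ h : u ⊗ₜ[ℂ] u ∈ C, e ⟨u ⊗ₜ[ℂ] u, h⟩ = c • u) :
    Module.finrank ℂ M = 1 ∧ ∀ (g : G) (x : M), ρ g x = x := by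
  classical
  have hu0 : u ≠ 0 := by
    rintro rfl
    obtain ⟨x, hx, -⟩ := hfix
    apply hx
    have : x ∈ Submodule.span ℂ (Set.range fun g => ρ g (0 : M)) := hgen ▸ Submodule.mem_top
    simpa using this
  have hmem : ∀ g : G, (ρ.tprod ρ) g (u ⊗ₜ[ℂ] u) ∈ C := fun g => by
    rw [hC]
    exact Submodule.subset_span ⟨g, rfl⟩
  have hmem1 : u ⊗ₜ[ℂ] u ∈ C := by simpa using hmem 1
  let D : M →ₗ[ℂ] M ⊗[ℂ] M := c • (C.subtype ∘ₗ e.symm.toLinearMap)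
  have hD : ∀ g : G, D (ρ g u) = ρ g u ⊗ₜ[ℂ] ρ g u := by
    intro g
    have h1 := hequiv g _ hmem1 (hmem g)
    rw [heu hmem1, map_smul] at h1
    have h2 : e.symm (c • ρ g u) = ⟨_, hmem g⟩ := by rw [← h1, e.symm_apply_apply]
    have h3 : D (ρ g u) = ((e.symm (c • ρ g u) : C) : M ⊗[ℂ] M) := by
      simp [D]
    rw [h3, h2]
    simp
  have hinj : ∀ g : G, ρ g u ≠ 0 := by
    intro g h
    apply hu0
    have := congrArg (ρ g⁻¹) h
    simpa using this
  have hind := glider_linearIndepOn D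
  have hn := LinearIndepOn.notMem_span hind
    (show u ∈ {x : M | x ≠ 0 ∧ D x = x ⊗ₜ[ℂ] x} from ⟨hu0, by simpa using hD 1⟩)
  obtain ⟨f, hf, hle⟩ := Submodule.exists_le_ker_of_notMem hn
  have hf0 : ∀ g : G, ρ g u ≠ u → f (ρ g u) = 0 := fun g hg =>
    hle (Submodule.subset_span ⟨ρ g u, ⟨⟨hinj g, hD g⟩, hg⟩, rfl⟩)
  let H : Subgroup G :=
    { carrier := {g | ρ g u = u}
      one_mem' := by simp
      mul_mem' := by
        intro a b ha hb
        simp only [Set.mem_ofPred_eq] at ha hb ⊢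
        rw [map_mul, Module.End.mul_apply, hb, ha]
      inv_mem' := by
        intro a ha
        simp only [Set.mem_ofPred_eq] at ha ⊢
        conv_lhs => rw [← ha]
        simp }
  have hHmem : ∀ g, g ∈ H ↔ ρ g u = u := fun g => Iff.rfl
  have hHtop : H = ⊤ := by
    by_contra hH
    obtain ⟨χ, hχH, k, hk⟩ := glider_exists_character hnilp H hH
    letI := Fintype.ofFinite G
    let w : M := ∑ g : G, ((χ g⁻¹ : ℂˣ) : ℂ) • ρ g u
    have hw : ∀ k : G, ρ k w = ((χ k : ℂˣ) : ℂ) • w := by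
      intro k
      simp only [w, map_sum, Finset.smul_sum, map_smul]
      refine Fintype.sum_equiv (Equiv.mulLeft k) _ _ fun g => ?_
      rw [Equiv.coe_mulLeft, smul_smul, map_mul, Module.End.mul_apply]
      congr 1
      rw [← Units.val_mul, ← map_mul]
      simp
    have hfw : f w = ((Finset.univ.filter (fun g => g ∈ H)).card : ℂ) * f u := by
      rw [Finset.card_filter, Nat.cast_sum, Finset.sum_mul]
      simp only [w, map_sum]
      refine Finset.sum_congr rfl fun g _ => ?_
      by_cases hg : g ∈ H
      · rw [map_smul, hχH _ (H.inv_mem hg), (hHmem g).1 hg]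
        simp [hg]
      · rw [map_smul, hf0 g hg]
        simp [hg]
    have hw0 : w ≠ 0 := by
      intro h
      rw [h, map_zero] at hfw
      have hcard : (Finset.univ.filter (fun g => g ∈ H)).card ≠ 0 :=
        Finset.card_ne_zero_of_mem (a := 1) (by simp [H.one_mem])
      exact mul_ne_zero (Nat.cast_ne_zero.2 hcard) hf hfw.symm
    have h1 := honedim (Submodule.span ℂ {w}) (by
      intro g x hx
      obtain ⟨a, rfl⟩ := Submodule.mem_span_singleton.1 hx
      rw [map_smul, hw]
      exact Submodule.smul_mem _ _ (Submodule.smul_mem _ _ (Submodule.mem_span_singleton_self w)))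
      (finrank_span_singleton hw0) k w (Submodule.mem_span_singleton_self w)
    rw [hw k] at h1
    apply hk
    apply Units.ext
    have h2 : ((χ k : ℂˣ) : ℂ) • w = (1 : ℂ) • w := by rw [h1, one_smul]
    exact smul_left_injective ℂ hw0 h2
  have hfixu : ∀ g, ρ g u = u := fun g => (hHmem g).1 (hHtop ▸ Subgroup.mem_top g)
  have hspan : Submodule.span ℂ {u} = ⊤ := by
    rw [← hgen]
    simp [hfixu, Set.range_const]
  refine ⟨?_, fun g x => ?_⟩
  · rw [← finrank_top, ← hspan]
    exact finrank_span_singleton hu0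
  · have hx : x ∈ Submodule.span ℂ {u} := hspan ▸ Submodule.mem_top
    obtain ⟨a, rfl⟩ := Submodule.mem_span_singleton.1 hx
    rw [map_smul, hfixu]
end
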